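/- Let Ω ⊂ ℝⁿ be a bounded domain and let u ∈ C³(Ω) ∩ C¹(Ω̄) be a k-convex solution of S_k(D²u) = 1 in Ω. Then the maximum of |Du| over Ω̄ is attained on the boundary: max_{Ω̄} |Du| = max_{∂Ω} |Du|. -/

import Mathlib

open scoped Classical Topology
open Real Filter MeasureTheory

noncomputable section

/-- Euclidean space ℝⁿ. -/
abbrev Euc (n : ℕ) : Type := EuclideanSpace ℝ (Fin n)

/-- The standard basis vector `e i`. -/
def ebasis (n : ℕ) (i : Fin n) : Euc n := EuclideanSpace.single i 1

/-- The Hessian matrix `D²u(x)`. -/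
def hessMat (n : ℕ) (u : Euc n → ℝ) (x : Euc n) : Matrix (Fin n) (Fin n) ℝ :=
  Matrix.of fun i j => iteratedFDeriv ℝ 2 u x ![ebasis n i, ebasis n j]

/-- The Laplacian `Δu(x)` (trace of the Hessian). -/
def lapl (n : ℕ) (u : Euc n → ℝ) (x : Euc n) : ℝ := ∑ i, hessMat n u x i i

/-- The `k`-th elementary symmetric function of the eigenvalues of an `n × n` matrix,
expressed through the coefficients of the characteristic polynomial. -/
def matSk (n k : ℕ) (M : Matrix (Fin n) (Fin n) ℝ) : ℝ :=
  (-1 : ℝ) ^ k * (Matrix.charpoly M).coeff (n - k)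

/-- `S_k(D²u)(x)`. -/
def SkHess (n k : ℕ) (u : Euc n → ℝ) (x : Euc n) : ℝ := matSk n k (hessMat n u x)

/-- `u` is `k`-convex on `U`: the eigenvalues of the Hessian lie in the Gårding cone `Γ_k`. -/
def KConvexOn (n k : ℕ) (u : Euc n → ℝ) (U : Set (Euc n)) : Prop :=
  ∀ x ∈ U, ∀ j : ℕ, 1 ≤ j → j ≤ k → 0 < matSk n j (hessMat n u x)

/-- Membership in the class `𝒜_k`: symmetric positive definite with `S_k(λ(A)) = 1`. -/
def MemA (n k : ℕ) (A : Matrix (Fin n) (Fin n) ℝ) : Prop :=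
  A.IsSymm ∧ A.PosDef ∧ matSk n k A = 1

/-- The quadratic form `½ xᵀ A x`. -/
def quadA (n : ℕ) (A : Matrix (Fin n) (Fin n) ℝ) (x : Euc n) : ℝ :=
  (1 / 2) * ∑ i, ∑ j, x i * A i j * x j

/-- The linear form `b ⋅ x`. -/
def linB (n : ℕ) (b x : Euc n) : ℝ := ∑ i, b i * x i

/-- `λ_max(A) < c`, expressed through the quadratic form (for symmetric `A`). -/
def lambdaMaxLT (n : ℕ) (A : Matrix (Fin n) (Fin n) ℝ) (c : ℝ) : Prop :=
  ∀ x : Euc n, x ≠ 0 → ∑ i, ∑ j, x i * A i j * x j < c * ‖x‖ ^ 2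

/-- `u` is smooth on an open neighbourhood of the (closed) set `S`;
this is our rendering of `u ∈ C^∞(S)` for a closed set `S`. -/
def SmoothOnNhd (n : ℕ) (u : Euc n → ℝ) (S : Set (Euc n)) : Prop :=
  ∃ U : Set (Euc n), IsOpen U ∧ S ⊆ U ∧ ContDiffOn ℝ (⊤ : ℕ∞) u U

/-- A smooth bounded strictly convex domain in ℝⁿ. -/
def SmoothStrictConvexDomain (n : ℕ) (Ω : Set (Euc n)) : Prop :=
  IsOpen Ω ∧ Bornology.IsBounded Ω ∧ Ω.Nonempty ∧ Convex ℝ Ω ∧ StrictConvex ℝ Ω ∧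
    ∃ f : Euc n → ℝ, ContDiff ℝ (⊤ : ℕ∞) f ∧ Ω = {x | f x < 0} ∧
      ∀ x ∈ frontier Ω, fderiv ℝ f x ≠ 0

/-- Extension of `u` by the constant value `v` inside `Ω`. -/
def extBy (n : ℕ) (Ω : Set (Euc n)) (v : ℝ) (u : Euc n → ℝ) : Euc n → ℝ :=
  fun x => if x ∈ Ω then v else u x

/-- `u` (vanishing on `∂Ω`) is quasiconvex: all sublevel sets of its zero-extension are convex. -/
def QuasiconvexSol (n : ℕ) (Ω : Set (Euc n)) (u : Euc n → ℝ) : Prop :=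
  ∀ t : ℝ, Convex ℝ {x : Euc n | extBy n Ω 0 u x ≤ t}

/-- The `k`-th elementary symmetric polynomial of a vector `a ∈ ℝⁿ`. -/
def esymmVec (n k : ℕ) (a : Fin n → ℝ) : ℝ :=
  ∑ s ∈ Finset.powersetCard k (Finset.univ : Finset (Fin n)), ∏ i ∈ s, a i

/-- `h_k(a) = max_i S_{k-1}(a)|_{a_i = 0} · a_i`. -/
def hkfun (n k : ℕ) (a : Fin n → ℝ) : ℝ :=
  ⨆ i : Fin n, esymmVec n (k - 1) (Function.update a i 0) * a i

/-- The exponent `-k / (2 h_k(a))`. -/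
def genExp (n k : ℕ) (a : Fin n → ℝ) : ℝ := -(k : ℝ) / (2 * hkfun n k a)

/-- The integrand `(1 + α t^{-k/(2h_k(a))})^{1/k}`. -/
def genInt (n k : ℕ) (a : Fin n → ℝ) (α t : ℝ) : ℝ :=
  (1 + α * t ^ genExp n k a) ^ ((1 : ℝ) / (k : ℝ))

/-- The generalized symmetric function `ū`. -/
def ubar (n k : ℕ) (a : Fin n → ℝ) (R₀ α : ℝ) (x : Euc n) : ℝ :=
  ∫ t in R₀..(quadA n (Matrix.diagonal a) x), genInt n k a α t

/-- `μ(α) = ∫_{R₀}^∞ ((1 + α t^{-k/(2h_k(a))})^{1/k} - 1) dt - R₀`. -/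
def muA (n k : ℕ) (a : Fin n → ℝ) (R₀ α : ℝ) : ℝ :=
  (∫ t in Set.Ioi R₀, (genInt n k a α t - 1)) - R₀

/-- The ellipsoid `E_R(xb) = {x : ½ (x - xb)ᵀ A (x - xb) < R}`. -/
def ESet (n : ℕ) (A : Matrix (Fin n) (Fin n) ℝ) (xb : Euc n) (R : ℝ) : Set (Euc n) :=
  {x : Euc n | quadA n A (x - xb) < R}

/-- The non-concentric convex ring `Ω_R^ε = E_R(0) ∖ B̄_ε(x₀)`. -/
def OmegaRe (n : ℕ) (a : Fin n → ℝ) (x₀ : Euc n) (ε R : ℝ) : Set (Euc n) :=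
  ESet n (Matrix.diagonal a) 0 R \ closure (Metric.ball x₀ ε)

/-- `u` is a `k`-convex solution of the approximating problem
`S_k(D²u) = 1` in `Ω_R^ε`, `u = 0` on `∂B_ε(x₀)`, `u = ū` on `∂E_R(0)`. -/
def ApproxSol (n k : ℕ) (a : Fin n → ℝ) (x₀ : Euc n) (ε R R₀ α : ℝ)
    (u : Euc n → ℝ) : Prop :=
  SmoothOnNhd n u (closure (OmegaRe n a x₀ ε R)) ∧
  KConvexOn n k u (OmegaRe n a x₀ ε R) ∧
  (∀ x ∈ OmegaRe n a x₀ ε R, SkHess n k u x = 1) ∧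
  (∀ x ∈ Metric.sphere x₀ ε, u x = 0) ∧
  (∀ x : Euc n, quadA n (Matrix.diagonal a) x = R → u x = ubar n k a R₀ α x)

/-- The constant `C_ε` of the boundary gradient estimate. -/
def Ceps (n k : ℕ) (C ε : ℝ) : ℝ :=
  if 2 * k < n then C * ((n : ℝ) / (k : ℝ) - 2) * ε⁻¹
  else if 2 * k = n then C * ε⁻¹ * |Real.log ε|⁻¹
  else C * (2 - (n : ℝ) / (k : ℝ)) * ε ^ (1 - (n : ℝ) / (k : ℝ))

/-- `u` is a `k`-convex solution of the exterior Dirichlet problem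
`S_k(D²u) = 1` in `ℝⁿ ∖ B̄_ε(x₀)`, `u = 0` on `∂B_ε(x₀)`, with quadratic asymptotics
`½ xᵀAx + c` at infinity (`A = diag a`). -/
def ExtBallSol (n k : ℕ) (a : Fin n → ℝ) (x₀ : Euc n) (ε c : ℝ) (u : Euc n → ℝ) : Prop :=
  SmoothOnNhd n u (Metric.ball x₀ ε)ᶜ ∧
  KConvexOn n k u (closure (Metric.ball x₀ ε))ᶜ ∧
  (∀ x ∈ (closure (Metric.ball x₀ ε))ᶜ, SkHess n k u x = 1) ∧
  (∀ x ∈ Metric.sphere x₀ ε, u x = 0) ∧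
  Tendsto (fun x : Euc n => u x - (quadA n (Matrix.diagonal a) x + c))
    (cocompact (Euc n)) (𝓝 0)

/-- `u` is a `k`-convex solution of the exterior Dirichlet problem on `ℝⁿ ∖ Ω₀` with
asymptotics `½ xᵀAx + b·x + c` at infinity. -/
def ExtDomSol (n k : ℕ) (Ω₀ : Set (Euc n)) (A : Matrix (Fin n) (Fin n) ℝ) (b : Euc n)
    (c : ℝ) (u : Euc n → ℝ) : Prop :=
  SmoothOnNhd n u Ω₀ᶜ ∧
  KConvexOn n k u (closure Ω₀)ᶜ ∧
  (∀ x ∈ (closure Ω₀)ᶜ, SkHess n k u x = 1) ∧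
  (∀ x ∈ frontier Ω₀, u x = 0) ∧
  Tendsto (fun x : Euc n => u x - (quadA n A x + linB n b x + c))
    (cocompact (Euc n)) (𝓝 0)

/-- `u` is a solution of the exterior Dirichlet problem for the Laplace equation
`Δu = 1` on `ℝⁿ ∖ Ω₀` with asymptotics `½ xᵀAx + b·x + c` at infinity. -/
def ExtDomSolLap (n : ℕ) (Ω₀ : Set (Euc n)) (A : Matrix (Fin n) (Fin n) ℝ) (b : Euc n)
    (c : ℝ) (u : Euc n → ℝ) : Prop :=
  SmoothOnNhd n u Ω₀ᶜ ∧
  (∀ x ∈ (closure Ω₀)ᶜ, lapl n u x = 1) ∧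
  (∀ x ∈ frontier Ω₀, u x = 0) ∧
  Tendsto (fun x : Euc n => u x - (quadA n A x + linB n b x + c))
    (cocompact (Euc n)) (𝓝 0)

/-- `u` solves the exterior problem `Δu = 0` in `ℝⁿ ∖ Ω̄`, `u = 1` on `∂Ω`,
`u → 0` at infinity. -/
def HarmExtSol (n : ℕ) (Ω : Set (Euc n)) (u : Euc n → ℝ) : Prop :=
  SmoothOnNhd n u Ωᶜ ∧
  (∀ x ∈ (closure Ω)ᶜ, lapl n u x = 0) ∧
  (∀ x ∈ frontier Ω, u x = 1) ∧
  Tendsto u (cocompact (Euc n)) (𝓝 0)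

end

/-!
Fix a direction `e` and put `w = ∂ₑu`. At a point of `Ω` let `qᵢ` be an orthonormal eigenbasis of
`D²u` with eigenvalues `λᵢ`. Differentiating `S_k(D²u) = c` along `e` gives the linearized equation
`∑ᵢ σ_{k-1}(λ | i) D²w(qᵢ, qᵢ) = 0`, where `σ_{k-1}(λ | i)` omits the `i`-th eigenvalue. These
weights are positive on the Gårding cone `Γ_k`, by Newton's inequality
`σ_{j-1} σ_{j+1} ≤ σ_j²`, so `D²w` is nowhere negative definite. Hence `w + ε |x|²` has no interior
local maximum, and letting `ε → 0` bounds `w` on `Ω̄` by its values on `∂Ω`. Finally `|Du|` is the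
supremum of `∂ₑu` over unit vectors `e`.
-/

section Newton

open Polynomial

theorem splits_derivative {p : ℝ[X]} (hp : p.Splits) : (derivative p).Splits := by
  rw [splits_iff_card_roots] at hp ⊢
  have hrolle := card_roots_le_derivative p
  have hdeg := natDegree_derivative_le p
  have hcard := card_roots' (derivative p)
  rcases Nat.eq_zero_or_pos p.natDegree with h0 | hpos
  · simp [derivative_of_natDegree_zero h0]
  · omega

theorem splits_iterate_derivative {p : ℝ[X]} (hp : p.Splits) (m : ℕ) :
    (derivative^[m] p).Splits := by
  induction m with
  | zero => exact hp
  | succ m ih => exact Function.iterate_succ_apply' derivative m p ▸ splits_derivative ih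

theorem laguerre_inequality {R : Type*} [CommRing R] [LinearOrder R] [IsStrictOrderedRing R]
    {p : R[X]} (hp : p.Splits) (x : R) :
    p.eval x * (derivative (derivative p)).eval x ≤ (derivative p).eval x ^ 2 := by
  induction hp using Submonoid.closure_induction with
  | mem f hf => rcases hf with ⟨a, rfl⟩ | ⟨a, rfl⟩ <;> simp
  | one => simp
  | mul f g _ _ hf hg =>
    have hfg := add_le_add (mul_le_mul_of_nonneg_left hf (sq_nonneg (g.eval x)))
      (mul_le_mul_of_nonneg_left hg (sq_nonneg (f.eval x)))
    simp only [derivative_mul, derivative_add, eval_mul, eval_add] at hfg ⊢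
    linarith

theorem newton_inequality_coeff {p : ℝ[X]} (hp : p.Splits) (m : ℕ) :
    (m + 2) * (p.coeff m * p.coeff (m + 2)) ≤ (m + 1) * p.coeff (m + 1) ^ 2 := by
  have hcoeff : ∀ j, (derivative^[j] p).eval 0 = j.factorial * p.coeff j := fun j => by
    rw [← coeff_zero_eq_eval_zero, coeff_iterate_derivative, zero_add, Nat.descFactorial_self,
      nsmul_eq_mul]
  have h := laguerre_inequality (splits_iterate_derivative hp m) 0
  simp only [← Function.iterate_succ_apply' derivative, hcoeff, Nat.factorial_succ] at h
  push_cast at h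
  have hpos : (0 : ℝ) < m.factorial ^ 2 * (m + 1) := by positivity
  refine le_of_mul_le_mul_left ?_ hpos
  linarith

theorem newton_inequality_esymm (s : Multiset ℝ) (k : ℕ) :
    s.esymm k * s.esymm (k + 2) ≤ s.esymm (k + 1) ^ 2 := by
  rcases lt_or_ge (Multiset.card s) (k + 2) with hlt | hge
  · have hzero : s.esymm (k + 2) = 0 := by
      simp [Multiset.esymm, Multiset.powersetCard_eq_empty (k + 2) hlt]
    rw [hzero, mul_zero]
    positivity
  obtain ⟨m, hm⟩ := Nat.exists_eq_add_of_le hge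
  have hsplits : (s.map fun r => X + C r).prod.Splits :=
    Splits.multisetProd fun f hf => by
      obtain ⟨r, -, rfl⟩ := Multiset.mem_map.1 hf
      exact Splits.X_add_C r
  have hvieta : ∀ i j, i + j = k + 2 →
      (s.map fun r => X + C r).prod.coeff (m + i) = s.esymm j := fun i j hij => by
    rw [Multiset.prod_X_add_C_coeff s (by omega), show Multiset.card s - (m + i) = j by omega]
  have h := newton_inequality_coeff hsplits m
  rw [hvieta 2 k (by omega), hvieta 1 (k + 1) (by omega), ← add_zero m,
    hvieta 0 (k + 2) (by omega), mul_comm (s.esymm (k + 2)), add_zero] at h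
  rcases le_or_gt (s.esymm k * s.esymm (k + 2)) 0 with hneg | hpos
  · exact hneg.trans (sq_nonneg _)
  · have hm1 : (0 : ℝ) < m + 1 := by positivity
    refine le_of_mul_le_mul_left ?_ hm1
    linarith

theorem esymm_cons_succ {R : Type*} [CommSemiring R] (a : R) (s : Multiset R) (k : ℕ) :
    (a ::ₘ s).esymm (k + 1) = s.esymm (k + 1) + a * s.esymm k := by
  simp [Multiset.esymm, Multiset.powersetCard_cons, Multiset.sum_map_mul_left]

theorem esymm_zero {R : Type*} [CommSemiring R] (s : Multiset R) : s.esymm 0 = 1 := by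
  simp [Multiset.esymm]

theorem esymm_pos_of_cons {a : ℝ} {s : Multiset ℝ} {k : ℕ}
    (h : ∀ j ≤ k + 1, 0 < (a ::ₘ s).esymm j) : 0 < s.esymm k := by
  induction k with
  | zero => simp [esymm_zero]
  | succ k ih =>
    have hk : 0 < s.esymm k := ih fun j hj => h j (by omega)
    have h1 : 0 < s.esymm (k + 1) + a * s.esymm k := esymm_cons_succ a s k ▸ h (k + 1) (by omega)
    have h2 : 0 < s.esymm (k + 2) + a * s.esymm (k + 1) :=
      esymm_cons_succ a s (k + 1) ▸ h (k + 2) le_rfl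
    have hnewton := newton_inequality_esymm s k
    by_contra! hneg
    -- For `σ = s.esymm`: `σₖ σₖ₊₂ > -a σₖ σₖ₊₁ ≥ σₖ₊₁²`, against Newton's inequality.
    have hlower := mul_pos hk h2
    have hupper := mul_nonneg (neg_nonneg.2 hneg) h1.le
    linarith

end Newton

theorem hasDerivAt_matrix_det {𝕜 ι : Type*} [NontriviallyNormedField 𝕜] [Fintype ι] [DecidableEq ι]
    {A : 𝕜 → Matrix ι ι 𝕜} {A' : Matrix ι ι 𝕜} {t : 𝕜}
    (hA : ∀ i j, HasDerivAt (fun s => A s i j) (A' i j) t) :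
    HasDerivAt (fun s => (A s).det) (A' * (A t).adjugate).trace t := by
  let D : ContinuousMultilinearMap 𝕜 (fun _ : ι => ι → 𝕜) 𝕜 :=
    { Matrix.detRowAlternating.toMultilinearMap with
      cont := Continuous.matrix_det (A := fun M : Matrix ι ι 𝕜 => M) continuous_id }
  have hA' : HasDerivAt (fun s i j => A s i j) (fun i j => A' i j) t :=
    hasDerivAt_pi.2 fun i => hasDerivAt_pi.2 (hA i)
  have hrow : ∀ i, ((A t).updateRow i (A' i)).det = ∑ j, A' i j * (A t).adjugate j i := fun i => by
    rw [Matrix.det_eq_sum_mul_adjugate_row _ i]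
    simp [Matrix.adjugate_apply]
  refine ((D.hasFDerivAt (A t)).comp_hasDerivAt t hA').congr_deriv ?_
  calc D.linearDeriv (A t) A'
      = ∑ i, ((A t).updateRow i (A' i)).det := D.linearDeriv_apply _ _
    _ = (A' * (A t).adjugate).trace := Finset.sum_congr rfl fun i _ => hrow i

open Finset in
theorem sum_powersetCard_succ_sum_erase {ι R : Type*} [DecidableEq ι] [AddCommMonoid R]
    (S : Finset ι) (k : ℕ) (f : ι → Finset ι → R) :
    ∑ s ∈ S.powersetCard (k + 1), ∑ i ∈ s, f i (s.erase i) =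
      ∑ i ∈ S, ∑ t ∈ (S.erase i).powersetCard k, f i t := by
  rw [sum_sigma', sum_sigma']
  refine sum_bij' (fun p _ => ⟨p.2, p.1.erase p.2⟩) (fun p _ => ⟨insert p.1 p.2, p.1⟩)
    ?_ ?_ ?_ ?_ ?_
  · rintro ⟨s, i⟩ h
    simp only [mem_sigma, mem_powersetCard] at h ⊢
    exact ⟨h.1.1 h.2, erase_subset_erase i h.1.1, by rw [card_erase_of_mem h.2, h.1.2]; rfl⟩
  · rintro ⟨i, t⟩ h
    simp only [mem_sigma, mem_powersetCard, subset_erase] at h ⊢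
    exact ⟨⟨insert_subset h.1 h.2.1.1, by rw [card_insert_of_notMem h.2.1.2, h.2.2]⟩,
      mem_insert_self i t⟩
  · rintro ⟨s, i⟩ h
    simp [insert_erase (mem_sigma.1 h).2]
  · rintro ⟨i, t⟩ h
    simp only [mem_sigma, mem_powersetCard, subset_erase] at h
    simp [erase_insert h.2.1.2]
  · rintro ⟨s, i⟩ _
    rfl

theorem matSk_eq_sum_minors {n k : ℕ} (hk : k ≤ n) (M : Matrix (Fin n) (Fin n) ℝ) :
    matSk n k M = ∑ s ∈ Finset.univ.powersetCard k,
      (M.submatrix (Subtype.val : s → Fin n) (Subtype.val : s → Fin n)).det := by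
  have h := M.charpoly_coeff_eq_sum_minors k (by simpa using hk)
  rw [Fintype.card_fin] at h
  rw [matSk, h, ← mul_assoc, ← mul_pow]
  simp

theorem trace_mul_adjugate_submatrix_diagonal {ι R : Type*} [DecidableEq ι] [CommRing R]
    (d : ι → R) (B : Matrix ι ι R) (s : Finset ι) :
    (B.submatrix (Subtype.val : s → ι) Subtype.val *
      ((Matrix.diagonal d).submatrix (Subtype.val : s → ι) Subtype.val).adjugate).trace =
      ∑ i ∈ s, B i i * ∏ j ∈ s.erase i, d j := by
  have hprod : ∀ i : s, ∏ j ∈ Finset.univ.erase i, d j = ∏ j ∈ s.erase i, d j := fun i => by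
    refine (Finset.prod_map (Finset.univ.erase i) (Function.Embedding.subtype _) d).symm.trans ?_
    rw [Finset.map_erase, Finset.univ_eq_attach]
    exact congrArg (fun S => ∏ j ∈ S.erase i, d j) Finset.attach_map_val
  rw [Matrix.submatrix_diagonal _ _ Subtype.val_injective, Matrix.adjugate_diagonal]
  simp only [Matrix.trace, Matrix.diag_apply, Matrix.mul_diagonal, Matrix.submatrix_apply,
    Function.comp_apply, hprod]
  exact Finset.sum_coe_sort s fun i => B i i * ∏ j ∈ s.erase i, d j

/-- The `k`-th elementary symmetric function `σ_k(d | i)` of the family `d` with its `i`-th entry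
omitted; it is the partial derivative of `σ_{k+1}(d)` in `dᵢ`. -/
def esymmErase {ι R : Type*} [Fintype ι] [DecidableEq ι] [CommSemiring R] (d : ι → R) (k : ℕ)
    (i : ι) : R :=
  ((Finset.univ.erase i).val.map d).esymm k

theorem hasDerivAt_matSk_of_diagonal {n k : ℕ} (hk : k + 1 ≤ n)
    {H : ℝ → Matrix (Fin n) (Fin n) ℝ} {B : Matrix (Fin n) (Fin n) ℝ} {d : Fin n → ℝ} {t : ℝ}
    (hH : ∀ i j, HasDerivAt (fun s => H s i j) (B i j) t) (hdiag : H t = Matrix.diagonal d) :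
    HasDerivAt (fun s => matSk n (k + 1) (H s)) (∑ i, B i i * esymmErase d k i) t := by
  simp only [matSk_eq_sum_minors hk]
  refine (HasDerivAt.fun_sum fun s _ => hasDerivAt_matrix_det
    (A' := B.submatrix Subtype.val Subtype.val) fun i j => hH i j).congr_deriv ?_
  simp only [hdiag, trace_mul_adjugate_submatrix_diagonal, esymmErase, Finset.esymm_map_val,
    Finset.mul_sum]
  exact sum_powersetCard_succ_sum_erase Finset.univ k fun i t => B i i * ∏ j ∈ t, d j

theorem hasDerivAt_matrix_mul_mul {𝕜 l m n o : Type*} [NontriviallyNormedField 𝕜] [Fintype m]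
    [Fintype n] {H : 𝕜 → Matrix m n 𝕜} {B : Matrix m n 𝕜} {t : 𝕜} (P : Matrix l m 𝕜)
    (Q : Matrix n o 𝕜) (hH : ∀ i j, HasDerivAt (fun s => H s i j) (B i j) t) (i : l)
    (j : o) : HasDerivAt (fun s => (P * H s * Q) i j) ((P * B * Q) i j) t := by
  simp only [Matrix.mul_apply]
  exact .fun_sum fun b _ => .mul_const (.fun_sum fun a _ => .const_mul _ (hH a b)) _

open Matrix in
theorem star_eigenvectorUnitary_mul_mul_apply_self {𝕜 ι : Type*} [RCLike 𝕜] [Fintype ι]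
    [DecidableEq ι] {A : Matrix ι ι 𝕜} (hA : A.IsHermitian) (B : Matrix ι ι 𝕜) (i : ι) :
    (star (hA.eigenvectorUnitary : Matrix ι ι 𝕜) * B * hA.eigenvectorUnitary) i i =
      star ⇑(hA.eigenvectorBasis i) ⬝ᵥ B *ᵥ ⇑(hA.eigenvectorBasis i) := by
  rw [Matrix.mul_assoc, Matrix.mul_apply']
  rfl

open Matrix in
theorem hasDerivAt_matSk {n k : ℕ} (hk : k + 1 ≤ n) {H : ℝ → Matrix (Fin n) (Fin n) ℝ}
    {B : Matrix (Fin n) (Fin n) ℝ} {t : ℝ} (hH : ∀ i j, HasDerivAt (fun s => H s i j) (B i j) t)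
    (hA : (H t).IsHermitian) :
    HasDerivAt (fun s => matSk n (k + 1) (H s))
      (∑ i, (⇑(hA.eigenvectorBasis i) ⬝ᵥ B *ᵥ ⇑(hA.eigenvectorBasis i)) *
        esymmErase hA.eigenvalues k i) t := by
  set U : Matrix (Fin n) (Fin n) ℝ := (hA.eigenvectorUnitary : Matrix (Fin n) (Fin n) ℝ)
  have hinvariant : ∀ M, matSk n (k + 1) (star U * M * U) = matSk n (k + 1) M := fun M => by
    rw [matSk, matSk, Matrix.charpoly_mul_comm, ← mul_assoc,
      Unitary.mul_star_self_of_mem hA.eigenvectorUnitary.2, one_mul]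
  have hdiag : star U * H t * U = diagonal hA.eigenvalues := by
    simpa [Unitary.conjStarAlgAut_star_apply] using hA.conjStarAlgAut_star_eigenvectorUnitary
  have h := hasDerivAt_matSk_of_diagonal hk (hasDerivAt_matrix_mul_mul (star U) U hH) hdiag
  simpa only [hinvariant, U, star_eigenvectorUnitary_mul_mul_apply_self, star_trivial] using h

theorem matSk_eq_esymm_eigenvalues {n k : ℕ} (hk : k ≤ n) {M : Matrix (Fin n) (Fin n) ℝ}
    (hM : M.IsHermitian) : matSk n k M = (Finset.univ.val.map hM.eigenvalues).esymm k := by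
  rw [matSk, Polynomial.coeff_eq_esymm_roots_of_splits hM.splits_charpoly (by simp),
    hM.roots_charpoly_eq_eigenvalues, M.charpoly_monic.leadingCoeff, M.charpoly_natDegree_eq_dim,
    Fintype.card_fin, Nat.sub_sub_self hk, one_mul, ← mul_assoc, ← mul_pow]
  simp

section SecondDerivative

variable {𝕜 E F : Type*} [NontriviallyNormedField 𝕜] [NormedAddCommGroup E] [NormedSpace 𝕜 E]
  [NormedAddCommGroup F] [NormedSpace 𝕜 F] {f : E → F} {x : E}

theorem hasDerivAt_add_smul (x q : E) (t : 𝕜) : HasDerivAt (fun s : 𝕜 => x + s • q) q t := by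
  simpa using ((hasDerivAt_id t).smul_const q).const_add x

theorem differentiableAt_fderiv (hf : ContDiffAt 𝕜 2 f x) : DifferentiableAt 𝕜 (fderiv 𝕜 f) x :=
  (hf.fderiv_right (m := 1) (by norm_num)).differentiableAt (by norm_num)

theorem contDiffAt_fderiv_apply_const {m n : WithTop ℕ∞} (hf : ContDiffAt 𝕜 n f x)
    (hmn : m + 1 ≤ n) (e : E) : ContDiffAt 𝕜 m (fun y => fderiv 𝕜 f y e) x :=
  (hf.fderiv_right hmn).clm_apply contDiffAt_const

theorem iteratedFDeriv_two_eq_fderiv_fderiv (hf : ContDiffAt 𝕜 2 f x) (a b : E) :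
    iteratedFDeriv 𝕜 2 f x ![a, b] = fderiv 𝕜 (fun y => fderiv 𝕜 f y b) x a := by
  simp [iteratedFDeriv_two_apply, fderiv_clm_apply (differentiableAt_fderiv hf)]

variable [IsRCLikeNormedField 𝕜]

theorem fderiv_fderiv_apply_comm (hf : ContDiffAt 𝕜 2 f x) (a b : E) :
    fderiv 𝕜 (fun y => fderiv 𝕜 f y b) x a = fderiv 𝕜 (fun y => fderiv 𝕜 f y a) x b := by
  have hsymm := hf.isSymmSndFDerivAt (by simp) a b
  simpa [fderiv_clm_apply (differentiableAt_fderiv hf)] using hsymm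

theorem fderiv_iteratedFDeriv_two (hf : ContDiffAt 𝕜 3 f x) (a b e : E) :
    fderiv 𝕜 (fun y => iteratedFDeriv 𝕜 2 f y ![a, b]) x e =
      iteratedFDeriv 𝕜 2 (fun y => fderiv 𝕜 f y e) x ![a, b] := by
  have hC2 : ∀ᶠ y in 𝓝 x, ContDiffAt 𝕜 2 f y :=
    (hf.of_le (by norm_num)).eventually (by simp)
  have hdir : ∀ v, ContDiffAt 𝕜 2 (fun y => fderiv 𝕜 f y v) x :=
    fun v => contDiffAt_fderiv_apply_const hf (by norm_num) v
  have hleft : (fun y => iteratedFDeriv 𝕜 2 f y ![a, b]) =ᶠ[𝓝 x]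
      fun y => fderiv 𝕜 (fun z => fderiv 𝕜 f z b) y a :=
    hC2.mono fun y hy => iteratedFDeriv_two_eq_fderiv_fderiv hy a b
  have hright : (fun y => fderiv 𝕜 (fun z => fderiv 𝕜 f z b) y e) =ᶠ[𝓝 x]
      fun y => fderiv 𝕜 (fun z => fderiv 𝕜 f z e) y b :=
    hC2.mono fun y hy => fderiv_fderiv_apply_comm hy e b
  rw [hleft.fderiv_eq, fderiv_fderiv_apply_comm (hdir b) e a, hright.fderiv_eq,
    iteratedFDeriv_two_eq_fderiv_fderiv (hdir e)]

end SecondDerivative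

theorem deriv_deriv_nonpos_of_isLocalMax {f : ℝ → ℝ} {a : ℝ} (hf : ContinuousAt f a)
    (hmax : IsLocalMax f a) : deriv (deriv f) a ≤ 0 := by
  by_contra! hpos
  have hmin : IsLocalMin f a := isLocalMin_of_deriv_deriv_pos hpos hmax.deriv_eq_zero hf
  have hconst : f =ᶠ[𝓝 a] fun _ => f a := by
    filter_upwards [hmin, hmax] with t using ge_antisymm
  have hzero : deriv (deriv f) a = 0 := by
    simpa using hconst.deriv.deriv_eq
  exact hpos.ne' hzero

theorem iteratedFDeriv_two_nonpos_of_isLocalMax {E : Type*} [NormedAddCommGroup E]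
    [NormedSpace ℝ E] {f : E → ℝ} {x : E} (hf : ContDiffAt ℝ 2 f x)
    (hmax : IsLocalMax f x) (q : E) : iteratedFDeriv ℝ 2 f x ![q, q] ≤ 0 := by
  set γ : ℝ → E := fun t => x + t • q
  have hγ : ∀ t, HasDerivAt γ q t := hasDerivAt_add_smul x q
  have hγ0 : γ 0 = x := by simp [γ]
  have hlim : Tendsto γ (𝓝 0) (𝓝 x) := hγ0 ▸ (hγ 0).continuousAt.tendsto
  have hfirst : deriv (f ∘ γ) =ᶠ[𝓝 0] (fun y => fderiv ℝ f y q) ∘ γ := by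
    filter_upwards [hlim.eventually (hf.eventually (by simp))] with t ht
    exact ((ht.differentiableAt (by norm_num)).hasFDerivAt.comp_hasDerivAt t (hγ t)).deriv
  have hsecond : deriv (deriv (f ∘ γ)) 0 = iteratedFDeriv ℝ 2 f x ![q, q] := by
    have hdiff : DifferentiableAt ℝ (fun y => fderiv ℝ f y q) (γ 0) :=
      hγ0.symm ▸ (contDiffAt_fderiv_apply_const (m := 1) hf (by norm_num) q).differentiableAt
        (by norm_num)
    rw [hfirst.deriv_eq, (hdiff.hasFDerivAt.comp_hasDerivAt 0 (hγ 0)).deriv, hγ0,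
      iteratedFDeriv_two_eq_fderiv_fderiv hf]
  rw [← hsecond]
  refine deriv_deriv_nonpos_of_isLocalMax ?_ ?_
  · exact (hγ0.symm ▸ hf.continuousAt : ContinuousAt f (γ 0)).comp (hγ 0).continuousAt
  · exact (hγ0.symm ▸ hmax : IsLocalMax f (γ 0)).comp_continuous (hγ 0).continuousAt
section MaximumPrinciple

variable {E : Type*} [NormedAddCommGroup E] [InnerProductSpace ℝ E]

theorem iteratedFDeriv_two_norm_sq (x q : E) :
    iteratedFDeriv ℝ 2 (fun y : E => ‖y‖ ^ 2) x ![q, q] = 2 * ‖q‖ ^ 2 := by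
  have hgrad : (fun y : E => fderiv ℝ (fun z : E => ‖z‖ ^ 2) y q) = ⇑(2 • innerSL ℝ q) := by
    ext y
    simp [real_inner_comm]
  rw [iteratedFDeriv_two_eq_fderiv_fderiv (contDiff_norm_sq ℝ).contDiffAt, hgrad,
    ContinuousLinearMap.fderiv]
  simp

theorem not_isLocalMax_add_norm_sq {w : E → ℝ} {x q : E} (hw : ContDiffAt ℝ 2 w x) (hq : q ≠ 0)
    (hD : 0 ≤ iteratedFDeriv ℝ 2 w x ![q, q]) {ε : ℝ} (hε : 0 < ε) :
    ¬ IsLocalMax (fun y => w y + ε * ‖y‖ ^ 2) x := by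
  intro hmax
  have hsq : ContDiffAt ℝ 2 (fun y : E => ‖y‖ ^ 2) x := (contDiff_norm_sq ℝ).contDiffAt
  have hle := iteratedFDeriv_two_nonpos_of_isLocalMax (hw.add (contDiffAt_const.mul hsq)) hmax q
  have hD2 : iteratedFDeriv ℝ 2 (fun y => w y + ε * ‖y‖ ^ 2) x ![q, q] =
      iteratedFDeriv ℝ 2 w x ![q, q] + ε * (2 * ‖q‖ ^ 2) := by
    rw [fun_iteratedFDeriv_add_apply hw (contDiffAt_const.mul hsq)]
    simp only [← smul_eq_mul ε]
    rw [iteratedFDeriv_const_smul_apply' hsq]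
    simp [iteratedFDeriv_two_norm_sq]
  have hpos : 0 < ε * (2 * ‖q‖ ^ 2) := by positivity
  linarith

theorem weak_maximum_principle [ProperSpace E] {Ω : Set E} (hopen : IsOpen Ω)
    (hbd : Bornology.IsBounded Ω) {w : E → ℝ} (hw : ContDiffOn ℝ 2 w Ω)
    (hcont : ContinuousOn w (closure Ω))
    (hD : ∀ x ∈ Ω, ∃ q ≠ 0, 0 ≤ iteratedFDeriv ℝ 2 w x ![q, q]) {M : ℝ}
    (hM : ∀ x ∈ frontier Ω, w x ≤ M) {y : E} (hy : y ∈ closure Ω) : w y ≤ M := by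
  obtain ⟨R, hR⟩ := hbd.closure.exists_norm_le
  have hbound : ∀ ε > 0, w y ≤ M + ε * R ^ 2 := by
    intro ε hε
    have hv : ContinuousOn (fun z => w z + ε * ‖z‖ ^ 2) (closure Ω) :=
      hcont.add (by fun_prop)
    obtain ⟨z, hz, hzmax⟩ := hbd.isCompact_closure.exists_isMaxOn ⟨y, hy⟩ hv
    have hzfr : z ∈ frontier Ω := by
      rw [hopen.frontier_eq]
      refine ⟨hz, fun hzΩ => ?_⟩
      obtain ⟨q, hq, hDq⟩ := hD z hzΩ
      exact not_isLocalMax_add_norm_sq (hw.contDiffAt (hopen.mem_nhds hzΩ)) hq hDq hε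
        (hzmax.isLocalMax (mem_of_superset (hopen.mem_nhds hzΩ) subset_closure))
    calc w y ≤ w y + ε * ‖y‖ ^ 2 := le_add_of_nonneg_right (by positivity)
      _ ≤ w z + ε * ‖z‖ ^ 2 := hzmax hy
      _ ≤ M + ε * R ^ 2 := by gcongr; exacts [hM z hzfr, hR z hz]
  refine ge_of_tendsto (x := 𝓝[>] (0 : ℝ)) (f := fun ε => M + ε * R ^ 2) ?_
    (eventually_mem_nhdsWithin.mono hbound)
  have hlim : Continuous fun ε : ℝ => M + ε * R ^ 2 := by fun_prop
  simpa using (hlim.tendsto 0).mono_left nhdsWithin_le_nhds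

end MaximumPrinciple

section Hessian

variable {n k : ℕ} {u : Euc n → ℝ} {x : Euc n}

open Matrix in
theorem dotProduct_hessMat_mulVec (u : Euc n → ℝ) (x v : Euc n) :
    ⇑v ⬝ᵥ hessMat n u x *ᵥ ⇑v = iteratedFDeriv ℝ 2 u x ![v, v] := by
  let b : Module.Basis (Fin n) ℝ (Euc n) := (EuclideanSpace.basisFun (Fin n) ℝ).toBasis
  let D : LinearMap.BilinForm ℝ (Euc n) := (fderiv ℝ (fderiv ℝ u) x).toLinearMap₁₂
  have hmatrix : hessMat n u x = LinearMap.BilinForm.toMatrix b D := by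
    ext i j
    simp [hessMat, ebasis, b, D, iteratedFDeriv_two_apply, LinearMap.BilinForm.toMatrix_apply]
  have hrepr : ⇑(b.repr v) = ⇑v := by
    ext i
    simp [b]
  rw [hmatrix, ← hrepr, ← LinearMap.BilinForm.apply_eq_dotProduct_toMatrix_mulVec b D v v,
    iteratedFDeriv_two_apply]
  rfl

theorem isHermitian_hessMat (hu : ContDiffAt ℝ 2 u x) : (hessMat n u x).IsHermitian := by
  ext i j
  have hsymm := hu.isSymmSndFDerivAt (by simp) (ebasis n j) (ebasis n i)
  simpa [hessMat, iteratedFDeriv_two_apply] using hsymm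

theorem hasDerivAt_hessMat_add_smul (hu : ContDiffAt ℝ 3 u x) (e : Euc n) (i j : Fin n) :
    HasDerivAt (fun t : ℝ => hessMat n u (x + t • e) i j)
      (hessMat n (fun y => fderiv ℝ u y e) x i j) 0 := by
  have hdiff : DifferentiableAt ℝ
      (fun y => iteratedFDeriv ℝ 2 u y ![ebasis n i, ebasis n j]) (x + (0 : ℝ) • e) := by
    rw [zero_smul, add_zero]
    exact (hu.differentiableAt_iteratedFDeriv (m := 2)
      (by norm_num)).continuousMultilinear_apply_const _
  have h := hdiff.hasFDerivAt.comp_hasDerivAt 0 (hasDerivAt_add_smul x e 0)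
  rw [zero_smul, add_zero, fderiv_iteratedFDeriv_two hu] at h
  exact h

theorem esymmErase_eigenvalues_pos (hk : k + 1 ≤ n) {M : Matrix (Fin n) (Fin n) ℝ}
    (hM : M.IsHermitian) (hpos : ∀ j, 1 ≤ j → j ≤ k + 1 → 0 < matSk n j M) (i : Fin n) :
    0 < esymmErase hM.eigenvalues k i := by
  refine esymm_pos_of_cons (a := hM.eigenvalues i) fun j hj => ?_
  rw [← Multiset.map_cons, Finset.erase_val, Multiset.cons_erase (Finset.mem_univ i),
    ← matSk_eq_esymm_eigenvalues (hj.trans hk) hM]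
  rcases Nat.eq_zero_or_pos j with rfl | hj0
  · rw [matSk_eq_esymm_eigenvalues n.zero_le hM, esymm_zero]
    exact one_pos
  · exact hpos j hj0 hj

theorem exists_iteratedFDeriv_two_fderiv_apply_nonneg (hk : k + 1 ≤ n) (hu : ContDiffAt ℝ 3 u x)
    (hpos : ∀ j, 1 ≤ j → j ≤ k + 1 → 0 < SkHess n j u x) {c : ℝ}
    (heq : SkHess n (k + 1) u =ᶠ[𝓝 x] fun _ => c) (e : Euc n) :
    ∃ q ≠ 0, 0 ≤ iteratedFDeriv ℝ 2 (fun y => fderiv ℝ u y e) x ![q, q] := by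
  set H : ℝ → Matrix (Fin n) (Fin n) ℝ := fun t => hessMat n u (x + t • e)
  have hH0 : H 0 = hessMat n u x := by simp [H]
  have hA : (H 0).IsHermitian := hH0 ▸ isHermitian_hessMat (hu.of_le (by norm_num))
  have hweight := esymmErase_eigenvalues_pos hk hA (hH0 ▸ hpos)
  have hconst : (fun t => matSk n (k + 1) (H t)) =ᶠ[𝓝 0] fun _ => c := by
    have hlim : Tendsto (fun t : ℝ => x + t • e) (𝓝 0) (𝓝 x) := by
      simpa using (hasDerivAt_add_smul x e (0 : ℝ)).continuousAt.tendsto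
    exact hlim.eventually heq
  have hlinearized := (hasDerivAt_matSk hk (hasDerivAt_hessMat_add_smul hu e) hA).unique
    ((hasDerivAt_const 0 c).congr_of_eventuallyEq hconst)
  simp only [dotProduct_hessMat_mulVec] at hlinearized
  by_contra! hneg
  have : Nonempty (Fin n) := ⟨⟨0, by omega⟩⟩
  refine (Finset.sum_neg (fun i _ => ?_) Finset.univ_nonempty).ne hlinearized
  exact mul_neg_of_neg_of_pos (hneg _ (hA.eigenvectorBasis.orthonormal.ne_zero i)) (hweight i)

end Hessian

theorem exists_mem_frontier_forall_norm_fderiv_le {E : Type*} [NormedAddCommGroup E]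
    [InnerProductSpace ℝ E] [ProperSpace E] {Ω : Set E} (hopen : IsOpen Ω)
    (hbd : Bornology.IsBounded Ω) (hne : Ω.Nonempty) {u : E → ℝ} (hu : ContDiffOn ℝ 3 u Ω)
    (hcont : ContinuousOn (fderiv ℝ u) (closure Ω))
    (hD : ∀ e, ∀ x ∈ Ω, ∃ q ≠ 0, 0 ≤ iteratedFDeriv ℝ 2 (fun y => fderiv ℝ u y e) x ![q, q]) :
    ∃ x ∈ frontier Ω, ∀ y ∈ closure Ω, ‖fderiv ℝ u y‖ ≤ ‖fderiv ℝ u x‖ := by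
  have hfrontier : (frontier Ω).Nonempty := by
    obtain ⟨z, hz⟩ := hne
    obtain ⟨q, hq, -⟩ := hD 0 z hz
    have : Nontrivial E := nontrivial_of_ne q 0 hq
    exact nonempty_frontier_iff.2 ⟨⟨z, hz⟩, fun h => NormedSpace.unbounded_univ ℝ E (h ▸ hbd)⟩
  have hcompact : IsCompact (frontier Ω) :=
    hbd.isCompact_closure.of_isClosed_subset isClosed_frontier frontier_subset_closure
  obtain ⟨x, hx, hmax⟩ := hcompact.exists_isMaxOn hfrontier
    (hcont.norm.mono frontier_subset_closure)
  refine ⟨x, hx, fun y hy => ?_⟩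
  have hdir : ∀ e, fderiv ℝ u y e ≤ ‖fderiv ℝ u x‖ * ‖e‖ := fun e =>
    weak_maximum_principle hopen hbd
      (fun z hz => (contDiffAt_fderiv_apply_const (hu.contDiffAt (hopen.mem_nhds hz))
        (by norm_num) e).contDiffWithinAt)
      (hcont.clm_apply continuousOn_const) (hD e)
      (fun z hz => (le_abs_self _).trans ((fderiv ℝ u z).le_of_opNorm_le (hmax hz) e)) hy
  refine ContinuousLinearMap.opNorm_le_bound _ (norm_nonneg _) fun e => abs_le'.2 ⟨hdir e, ?_⟩
  simpa only [map_neg, norm_neg] using hdir (-e)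

theorem statement6_general (n k : ℕ) (hk1 : 1 ≤ k) (hkn : k ≤ n)
    (Ω : Set (Euc n)) (hopen : IsOpen Ω) (hbd : Bornology.IsBounded Ω) (hne : Ω.Nonempty)
    (u : Euc n → ℝ) (hu3 : ContDiffOn ℝ 3 u Ω)
    (hu1 : ∃ U : Set (Euc n), IsOpen U ∧ closure Ω ⊆ U ∧ ContDiffOn ℝ 1 u U)
    (hconv : KConvexOn n k u Ω) (c : ℝ) (heq : ∀ x ∈ Ω, SkHess n k u x = c) :
    ∃ x ∈ frontier Ω, ∀ y ∈ closure Ω, ‖fderiv ℝ u y‖ ≤ ‖fderiv ℝ u x‖ := by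
  obtain ⟨k, rfl⟩ := Nat.exists_eq_add_of_le' hk1
  obtain ⟨U, hU, hΩU, hu1⟩ := hu1
  have hcont : ContinuousOn (fderiv ℝ u) (closure Ω) :=
    (hu1.continuousOn_fderiv_of_isOpen hU le_rfl).mono hΩU
  refine exists_mem_frontier_forall_norm_fderiv_le hopen hbd hne hu3 hcont fun e x hx => ?_
  have hΩ : Ω ∈ 𝓝 x := hopen.mem_nhds hx
  exact exists_iteratedFDeriv_two_fderiv_apply_nonneg hkn (hu3.contDiffAt hΩ) (hconv x hx)
    (mem_of_superset hΩ heq) e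

/-- maximum principle for the gradient, cf. Lemma 2.4: for a `k`-convex
solution of `S_k(D²u) = 1` in a bounded domain `Ω` of class `C³(Ω) ∩ C¹(Ω̄)`, the maximum
of `|Du|` over `Ω̄` is attained on `∂Ω`. -/
theorem statement6 (n k : ℕ) (hk1 : 1 ≤ k) (hkn : k ≤ n)
    (Ω : Set (Euc n)) (hopen : IsOpen Ω) (hbd : Bornology.IsBounded Ω)
    (hconn : IsConnected Ω)
    (u : Euc n → ℝ)
    (hu3 : ContDiffOn ℝ 3 u Ω)
    (hu1 : ∃ U : Set (Euc n), IsOpen U ∧ closure Ω ⊆ U ∧ ContDiffOn ℝ 1 u U)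
    (hconv : KConvexOn n k u Ω)
    (heq : ∀ x ∈ Ω, SkHess n k u x = 1) :
    ∃ x ∈ frontier Ω, ∀ y ∈ closure Ω, ‖fderiv ℝ u y‖ ≤ ‖fderiv ℝ u x‖ :=
  statement6_general n k hk1 hkn Ω hopen hbd hconn.nonempty u hu3 hu1 hconv 1 heq
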